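/- (Convergence of LAMB with β₂ > 0, Theorem 3 part 2.) Consider the LAMB iterates (with β₁ = 0, λ = 0, ε = 0): given x₁ ∈ ℝ^d and v₀ = 0, at each step t = 1,…,T draw b i.i.d. samples S_t from P, set g_t = (1/b) Σ_{s∈S_t} ∇ℓ(x_t, s), v_t = β₂ v_{t−1} + (1 − β₂) g_t² (elementwise), r_{t,j} = g_{t,j}/√(v_{t,j}), and update x_{t+1}^{(i)} = x_t^{(i)} − η φ(‖x_t^{(i)}‖) r_t^{(i)}/‖r_t^{(i)}‖ for each block i (assume r_t^{(i)} ≠ 0 almost surely). Suppose every block has dimension d_i = d/h, the batch size is b = T, and the stepsize is η = √(2(f(x₁) − f(x*))/(α_u² ‖L‖₁ T)). Then (1/T) Σ_{t=1}^T E‖∇f(x_t)‖² ≤ √(G² d/(h(1 − β₂))) · (α_u/α_l) · (√(2 (f(x₁) − f(x*)) ‖L‖₁ / T) + ‖σ̃‖₁/√T). -/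

import Mathlib

/-!
With `a = ∇f(x_t)` and `R = √(G² d / (h (1 - β₂)))`, each coordinate of the normalised direction
`r_t / ‖r_t^{(i)}‖` has modulus at most `1` and equals `c * g_t` for some `c ≥ R⁻¹`, because
`(1 - β₂) g_t² ≤ v_t ≤ G²`. Splitting coordinates according to whether `a` and `g_t` agree in sign
(`coord_step`) and using the blockwise descent inequality (`descent`) gives, on every sample path,

`f(x_{t+1}) ≤ f(x_t) - η (αl / R) ‖a‖² + η N_t + η² αu² ‖L‖₁ / 2`,

where `N_t` is a centred term, linear in `g_t - a`, plus `αu ∑ⱼ |g_{t,j} - a_j|`. Given the past, the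
integral of `N_t` over the batch `t` is at most `αu ‖σ̃‖₁ / √T` (`batch_mean`, `batch_abs_dev`).
Telescoping and inserting `η` gives the bound.

The function `φ` is not assumed measurable, so neither `x_t` nor `N_t` need be measurable. The
telescoped inequality is therefore kept pathwise and integrated batch by batch with
`integral_le_of_adapted`, which asks for integrability of the left-hand side only. The summands
`‖∇f(x_t)‖²` that are not integrable contribute `0` to the claim and are dropped beforehand.
-/

open MeasureTheory Finset

/-- The Euclidean norm of the `i`-th block of `u`, where the coordinates of `ℝ^d`
are partitioned into `h` blocks via the block-assignment map `blk`. -/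
noncomputable def blockNorm {d h : ℕ} (blk : Fin d → Fin h) (i : Fin h)
    (u : EuclideanSpace ℝ (Fin d)) : ℝ :=
  Real.sqrt (∑ j ∈ Finset.univ.filter (fun j => blk j = i), u j ^ 2)

/-! ### Integrating adapted increments -/

/-- Integration of an adapted sum of increments, one coordinate at a time. If `N t` depends only on
the coordinates `≤ t` and has integral at most `c` in coordinate `t`, then a function `M ≤ A + ∑ N t`
has integral at most `A + n c`. Only `M` is jointly integrable; the `N t` may fail to be jointly
measurable, which is why linearity of the integral cannot be used. The induction integrates the first
coordinate last and absorbs `N 0` into the constant `A`. -/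
lemma integral_le_of_adapted {Y : Type*} [MeasurableSpace Y] (Q : Measure Y)
    [IsProbabilityMeasure Q] (c : ℝ) : ∀ (n : ℕ) (A : ℝ) (M : (Fin n → Y) → ℝ)
    (N : Fin n → (Fin n → Y) → ℝ),
    Integrable M (Measure.pi fun _ : Fin n => Q) →
    (∀ t ω ω', (∀ s ≤ t, ω s = ω' s) → N t ω = N t ω') →
    (∀ t ω, Integrable (fun y => N t (Function.update ω t y)) Q) →
    (∀ t ω, ∫ y, N t (Function.update ω t y) ∂Q ≤ c) →
    (∀ ω, M ω ≤ A + ∑ t, N t ω) →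
    ∫ ω, M ω ∂(Measure.pi fun _ : Fin n => Q) ≤ A + n * c := by
  intro n
  induction n with
  | zero =>
    intro A M N hM _ _ _ hle
    calc ∫ ω, M ω ∂(Measure.pi fun _ : Fin 0 => Q)
        ≤ ∫ _, A ∂(Measure.pi fun _ : Fin 0 => Q) := by
          refine integral_mono hM (integrable_const _) fun ω => ?_
          simpa using hle ω
      _ = A + (0 : ℕ) * c := by simp
  | succ n ih =>
    intro A M N hM hdep hint hc hle
    obtain ⟨y₀⟩ : Nonempty Y := nonempty_of_isProbabilityMeasure Q
    have hmp := (measurePreserving_piFinSuccAbove (fun _ : Fin (n + 1) => Q) 0).symm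
    have hM' : Integrable (fun p : Y × (Fin n → Y) => M (Fin.cons p.1 p.2))
        (Q.prod (Measure.pi fun _ : Fin n => Q)) := by
      have := (hmp.integrable_comp_emb (MeasurableEquiv.measurableEmbedding _)).2 hM
      simpa [Function.comp_def, MeasurableEquiv.piFinSuccAbove, Fin.insertNthEquiv] using this
    have hI : ∫ ω, M ω ∂(Measure.pi fun _ : Fin (n + 1) => Q)
        = ∫ y, ∫ ω, M (Fin.cons y ω) ∂(Measure.pi fun _ : Fin n => Q) ∂Q := by
      rw [← integral_prod _ hM']
      have := hmp.integral_comp (MeasurableEquiv.measurableEmbedding _) M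
      rw [← this]
      simp [MeasurableEquiv.piFinSuccAbove, Fin.insertNthEquiv]
    -- The first increment as a function of the first coordinate; the tail of the point is irrelevant.
    have hN0 : ∀ (y : Y) (ω : Fin n → Y), N 0 (Fin.cons y ω)
        = N 0 (Function.update (fun _ => y₀) 0 y) := by
      intro y ω
      refine hdep _ _ _ fun s hs => ?_
      obtain rfl : s = 0 := by simpa using hs
      simp
    have hint0 := hint 0 (fun _ => y₀)
    rw [hI]
    calc ∫ y, ∫ ω, M (Fin.cons y ω) ∂(Measure.pi fun _ : Fin n => Q) ∂Q
        ≤ ∫ y, (A + N 0 (Function.update (fun _ => y₀) 0 y) + n * c) ∂Q := by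
          refine integral_mono_ae hM'.integral_prod_left
            (((integrable_const _).add hint0).add (integrable_const _)) ?_
          filter_upwards [hM'.prod_right_ae] with y hy
          refine ih _ _ (fun t ω => N t.succ (Fin.cons y ω)) hy ?_ ?_ ?_ ?_
          · intro t ω ω' h
            refine hdep _ _ _ fun s hs => ?_
            refine Fin.cases ?_ (fun s hs => ?_) s hs
            · intro _; simp
            · simpa using h s (by simpa using hs)
          · intro t ω
            simpa [Fin.cons_update] using hint t.succ (Fin.cons y ω)
          · intro t ω
            simpa [Fin.cons_update] using hc t.succ (Fin.cons y ω)
          · intro ω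
            have := hle (Fin.cons y ω)
            rw [Fin.sum_univ_succ, hN0] at this
            linarith
      _ ≤ A + ((n + 1 : ℕ) : ℝ) * c := by
          have hA : Integrable (fun y => A + N 0 (Function.update (fun _ => y₀) 0 y)) Q :=
            (integrable_const _).add hint0
          rw [integral_add hA (integrable_const _), integral_add (integrable_const _) hint0]
          have := hc 0 (fun _ => y₀)
          simp only [integral_const, probReal_univ, smul_eq_mul, one_mul, Nat.cast_add, Nat.cast_one]
          linarith

/-! ### Averages over a batch -/

section batch
open ProbabilityTheory

lemma batch_integrable {S : Type*} [MeasurableSpace S] (P : Measure S) [IsProbabilityMeasure P]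
    (T : ℕ) (u : S → ℝ) (hu : Integrable u P) (m : Fin T) :
    Integrable (fun ω : Fin T → S => u (ω m)) (Measure.pi fun _ : Fin T => P) :=
  (measurePreserving_eval (fun _ : Fin T => P) m).integrable_comp_of_integrable hu

lemma batch_integral {S : Type*} [MeasurableSpace S] (P : Measure S) [IsProbabilityMeasure P]
    (T : ℕ) (u : S → ℝ) (hu : AEStronglyMeasurable u P) (m : Fin T) :
    ∫ ω : Fin T → S, u (ω m) ∂(Measure.pi fun _ : Fin T => P) = ∫ s, u s ∂P := by
  have h := measurePreserving_eval (fun _ : Fin T => P) m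
  have hu' := hu
  rw [← h.map_eq] at hu'
  have := integral_map h.measurable.aemeasurable hu'
  rw [h.map_eq] at this
  exact this.symm

lemma batch_mean {S : Type*} [MeasurableSpace S] (P : Measure S) [IsProbabilityMeasure P]
    (T : ℕ) (hT : 0 < T) (u : S → ℝ) (hu : Integrable u P) :
    ∫ ω : Fin T → S, (T : ℝ)⁻¹ * ∑ m, u (ω m) ∂(Measure.pi fun _ : Fin T => P) = ∫ s, u s ∂P := by
  rw [integral_const_mul, integral_finsetSum _ fun m _ => batch_integrable P T u hu m]
  simp only [batch_integral P T u hu.aestronglyMeasurable]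
  have : (T : ℝ) ≠ 0 := by positivity
  simp
  field_simp

/-- The mean absolute deviation of the average of `T` i.i.d. samples is at most `σ / √T`: bound the
first moment by the second and use additivity of the variance. -/
lemma batch_abs_dev {S : Type*} [MeasurableSpace S] (P : Measure S) [IsProbabilityMeasure P]
    (T : ℕ) (hT : 0 < T) (u : S → ℝ) (hu : MemLp u 2 P) (σ : ℝ) (hσ : 0 ≤ σ)
    (hvar : ∫ s, (u s - ∫ s', u s' ∂P) ^ 2 ∂P ≤ σ ^ 2) :
    ∫ ω : Fin T → S, |(T : ℝ)⁻¹ * ∑ m, u (ω m) - ∫ s, u s ∂P| ∂(Measure.pi fun _ : Fin T => P)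
      ≤ σ / Real.sqrt T := by
  have hTp : (0 : ℝ) < T := by positivity
  set μ := ∫ s, u s ∂P with hμ
  set Q := Measure.pi fun _ : Fin T => P with hQ
  set X : (Fin T → S) → ℝ := fun ω => (T : ℝ)⁻¹ * ∑ m, u (ω m) with hX
  have hmem : ∀ m : Fin T, MemLp (fun ω : Fin T → S => u (ω m)) 2 Q := fun m =>
    hu.comp_measurePreserving (measurePreserving_eval (fun _ : Fin T => P) m)
  have hXmem : MemLp X 2 Q := (memLp_finsetSum _ fun m _ => hmem m).const_mul _
  have hXmean : ∫ ω, X ω ∂Q = μ := batch_mean P T hT u (hu.integrable (by norm_num))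
  have hind : iIndepFun (fun (m : Fin T) (ω : Fin T → S) => u (ω m)) Q :=
    iIndepFun_pi (X := fun _ => u) fun _ => hu.aestronglyMeasurable.aemeasurable
  have hVu : Var[u; P] ≤ σ ^ 2 := by
    rw [variance_eq_integral hu.aestronglyMeasurable.aemeasurable]; exact hvar
  have hVm : ∀ m : Fin T, Var[fun ω : Fin T → S => u (ω m); Q] = Var[u; P] := by
    intro m
    have h := measurePreserving_eval (fun _ : Fin T => P) m
    have hu' := hu.aestronglyMeasurable.aemeasurable
    rw [← h.map_eq] at hu' ⊢
    exact (variance_map hu' h.measurable.aemeasurable).symm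
  have hVX : Var[X; Q] ≤ σ ^ 2 / T := by
    have h1 : Var[∑ m : Fin T, (fun ω : Fin T → S => u (ω m)); Q] = T * Var[u; P] := by
      rw [IndepFun.variance_sum (fun m _ => hmem m)
        (fun i _ j _ hij => hind.indepFun hij)]
      simp [hVm]
    have h2 : X = fun ω => (T : ℝ)⁻¹ * (∑ m : Fin T, (fun ω : Fin T → S => u (ω m))) ω := by
      ext ω; simp [hX]
    rw [h2, variance_const_mul, h1]
    calc ((T : ℝ)⁻¹) ^ 2 * (T * Var[u; P]) = Var[u; P] / T := by field_simp
      _ ≤ _ := by gcongr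
  have hDmem : MemLp (fun ω => |X ω - μ|) 2 Q := (hXmem.sub (memLp_const μ)).abs
  have hsq : (∫ ω, |X ω - μ| ∂Q) ^ 2 ≤ σ ^ 2 / T := by
    have h1 := variance_nonneg (fun ω => |X ω - μ|) Q
    rw [variance_eq_sub hDmem] at h1
    have h2 : ∫ ω, ((fun ω => |X ω - μ|) ^ 2) ω ∂Q = Var[X; Q] := by
      rw [variance_eq_integral hXmem.aestronglyMeasurable.aemeasurable, hXmean]
      simp
    linarith
  rw [show σ / Real.sqrt T = Real.sqrt (σ ^ 2 / T) by
    rw [Real.sqrt_div (sq_nonneg _), Real.sqrt_sq hσ]]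
  exact Real.le_sqrt_of_sq_le hsq
end batch

/-! ### Blockwise smoothness -/

lemma blockNorm_nonneg {d h : ℕ} (blk : Fin d → Fin h) (i : Fin h)
    (u : EuclideanSpace ℝ (Fin d)) : 0 ≤ blockNorm blk i u := Real.sqrt_nonneg _

lemma blockNorm_smul {d h : ℕ} (blk : Fin d → Fin h) (i : Fin h) (c : ℝ) (hc : 0 ≤ c)
    (u : EuclideanSpace ℝ (Fin d)) : blockNorm blk i (c • u) = c * blockNorm blk i u := by
  unfold blockNorm
  rw [← Real.sqrt_sq hc, ← Real.sqrt_mul (by positivity), mul_sum, Real.sqrt_sq hc]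
  simp [mul_pow]

/-- Cauchy–Schwarz, block by block. -/
lemma sum_mul_le_blockNorm {d h : ℕ} (blk : Fin d → Fin h) (u w : EuclideanSpace ℝ (Fin d)) :
    ∑ j, u j * w j ≤ ∑ i, blockNorm blk i u * blockNorm blk i w := by
  rw [← sum_fiberwise univ blk]
  exact sum_le_sum fun i _ => Real.sum_mul_le_sqrt_mul_sqrt _ _ _

lemma abs_le_blockNorm {d h : ℕ} (blk : Fin d → Fin h) (u : EuclideanSpace ℝ (Fin d))
    (j : Fin d) : |u j| ≤ blockNorm blk (blk j) u := by
  apply Real.abs_le_sqrt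
  exact single_le_sum (f := fun j => u j ^ 2) (fun _ _ => sq_nonneg _) (by simp)

/-- The descent inequality for a blockwise smooth function: along the segment from `y` to `y + δ`,
`f` minus its linear and quadratic models has nonpositive derivative. -/
lemma descent {d h : ℕ} (blk : Fin d → Fin h) (f : EuclideanSpace ℝ (Fin d) → ℝ)
    (hfdiff : Differentiable ℝ f) (L : Fin h → ℝ)
    (hsmoothf : ∀ (y z : EuclideanSpace ℝ (Fin d)) (i : Fin h),
      blockNorm blk i (gradient f y - gradient f z) ≤ L i * blockNorm blk i (y - z))
    (y δ : EuclideanSpace ℝ (Fin d)) :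
    f (y + δ) ≤ f y + ∑ j, gradient f y j * δ j + (∑ i, L i * blockNorm blk i δ ^ 2) / 2 := by
  set K := ∑ i, L i * blockNorm blk i δ ^ 2 with hK
  set ψ : ℝ → ℝ := fun τ => f (y + τ • δ) - τ * inner ℝ (gradient f y) δ - τ ^ 2 * (K / 2) with hψ
  have hinner : ∀ u w : EuclideanSpace ℝ (Fin d), inner ℝ u w = ∑ j, u j * w j := by
    intro u w; simp [PiLp.inner_apply, mul_comm]
  have hder : ∀ τ, HasDerivAt ψ (inner ℝ (gradient f (y + τ • δ)) δ
      - inner ℝ (gradient f y) δ - τ * K) τ := by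
    intro τ
    have h1 : HasDerivAt (fun τ : ℝ => y + τ • δ) δ τ := by
      simpa using ((hasDerivAt_id τ).smul_const δ).const_add y
    have h2 : HasDerivAt (fun τ : ℝ => f (y + τ • δ)) (inner ℝ (gradient f (y + τ • δ)) δ) τ := by
      refine ((hfdiff (y + τ • δ)).hasGradientAt.hasFDerivAt.comp_hasDerivAt τ h1).congr_deriv ?_
      simp
    have h3 := (h2.sub ((hasDerivAt_id τ).mul_const (inner ℝ (gradient f y) δ))).sub
      ((hasDerivAt_pow 2 τ).mul_const (K / 2))
    refine h3.congr_deriv ?_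
    simp; ring
  have hanti : AntitoneOn ψ (Set.Icc 0 1) := by
    refine antitoneOn_of_deriv_nonpos (convex_Icc 0 1)
      (fun τ _ => (hder τ).continuousAt.continuousWithinAt)
      (fun τ _ => (hder τ).differentiableAt.differentiableWithinAt) fun τ hτ => ?_
    rw [interior_Icc] at hτ
    rw [(hder τ).deriv, ← inner_sub_left, hinner, hK, mul_sum, sub_nonpos]
    refine (sum_mul_le_blockNorm blk _ _).trans (sum_le_sum fun i _ => ?_)
    have h1 := hsmoothf (y + τ • δ) y i
    rw [add_sub_cancel_left, blockNorm_smul _ _ _ hτ.1.le] at h1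
    nlinarith [mul_le_mul_of_nonneg_right h1 (blockNorm_nonneg blk i δ)]
  have := hanti (Set.left_mem_Icc.2 zero_le_one) (Set.right_mem_Icc.2 zero_le_one) zero_le_one
  simp only [hψ, hinner] at this
  simp at this
  linarith

/-! ### The LAMB step and the convergence bound -/

/-- One coordinate of the update. Here `a` is a gradient coordinate, `g` its stochastic estimate and
`c * g` the normalised step. When `a` and `g` have the same sign, `c` may be lowered to `κ`; when the
signs differ, `|a| ≤ |g - a|`, so the loss is controlled by the noise. -/
lemma coord_step (p a g c κ αu : ℝ) (hp : 0 ≤ p) (hpu : p ≤ αu) (hκ : 0 ≤ κ) (hc : κ ≤ c)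
    (hcg : |c * g| ≤ 1) : -(p * a * (c * g)) ≤ -(p * κ * (a * g)) + αu * |g - a| := by
  have hαu : 0 ≤ αu := hp.trans hpu
  rcases le_total 0 (a * g) with h | h
  · have h1 : 0 ≤ p * ((c - κ) * (a * g)) := mul_nonneg hp (mul_nonneg (by linarith) h)
    have h2 : 0 ≤ αu * |g - a| := by positivity
    linarith
  · have h1 : |a| ≤ |g - a| := by
      apply sq_le_sq.1
      nlinarith [sq_nonneg g]
    have h2 : -(p * a * (c * g)) ≤ αu * |g - a| := by
      calc -(p * a * (c * g)) ≤ |p * a * (c * g)| := neg_le_abs _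
        _ = p * |a| * |c * g| := by rw [abs_mul, abs_mul, abs_of_nonneg hp]
        _ ≤ p * |a| * 1 := by gcongr
        _ ≤ αu * |g - a| := by rw [mul_one]; gcongr
    have h3 : 0 ≤ -(p * κ * (a * g)) := by
      have := mul_nonneg (mul_nonneg hp hκ) (neg_nonneg.2 h); linarith
    linarith

/-- Convergence of LAMB with `β₂ > 0` (Theorem 3, part 2): with batch size `b = T`,
stepsize `η = √(2(f x₁ - f x*)/(α_u² ‖L‖₁ T))`, and all blocks of dimension `d/h`,
the LAMB iterates (β₁ = 0, λ = 0, ε = 0) satisfy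
`(1/T) Σ_t E‖∇f (x t)‖² ≤ √(G² d/(h(1-β₂))) (α_u/α_l)
  (√(2(f x₁ - f x*)‖L‖₁/T) + ‖σ̃‖₁/√T)`. -/
theorem stmt12 {d h : ℕ} (hdvd : h ∣ d) (blk : Fin d → Fin h)
    (hcard : ∀ i : Fin h, (Finset.univ.filter (fun j => blk j = i)).card = d / h)
    {S : Type*} [MeasurableSpace S] (P : Measure S) [IsProbabilityMeasure P]
    (ℓ : EuclideanSpace ℝ (Fin d) → S → ℝ)
    (f : EuclideanSpace ℝ (Fin d) → ℝ)
    (hldiff : ∀ s, Differentiable ℝ (fun y => ℓ y s))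
    (hfdiff : Differentiable ℝ f)
    (hf : ∀ y, f y = ∫ s, ℓ y s ∂P)
    (hlint : ∀ y, Integrable (fun s => ℓ y s) P)
    (hgradmeas : ∀ y, Measurable (fun s => gradient (fun z => ℓ z s) y))
    (hgradint : ∀ y, Integrable (fun s => gradient (fun z => ℓ z s) y) P)
    (hgrad : ∀ y, gradient f y = ∫ s, gradient (fun z => ℓ z s) y ∂P)
    (lowbd : EuclideanSpace ℝ (Fin d)) (hlow : ∀ y, f lowbd ≤ f y)
    (L : Fin h → ℝ) (hLpos : 0 < ∑ i, L i)
    (hsmooth : ∀ (s : S) (y z : EuclideanSpace ℝ (Fin d)) (i : Fin h),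
      blockNorm blk i (gradient (fun w => ℓ w s) y - gradient (fun w => ℓ w s) z)
        ≤ L i * blockNorm blk i (y - z))
    (hsmoothf : ∀ (y z : EuclideanSpace ℝ (Fin d)) (i : Fin h),
      blockNorm blk i (gradient f y - gradient f z) ≤ L i * blockNorm blk i (y - z))
    (G : ℝ) (hG : 0 < G)
    (hGbd : ∀ (y : EuclideanSpace ℝ (Fin d)) (s : S) (j : Fin d),
      |gradient (fun z => ℓ z s) y j| ≤ G)
    (σt : Fin d → ℝ) (hσt : ∀ j, 0 ≤ σt j)
    (hvar : ∀ (y : EuclideanSpace ℝ (Fin d)) (j : Fin d),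
      ∫ s, (gradient (fun z => ℓ z s) y j - gradient f y j) ^ 2 ∂P ≤ σt j ^ 2)
    (φ : ℝ → ℝ) (αl αu : ℝ) (hαl : 0 < αl)
    (hφ : ∀ v, 0 ≤ v → αl ≤ φ v ∧ φ v ≤ αu)
    (β₂ : ℝ) (hβ₂0 : 0 < β₂) (hβ₂1 : β₂ < 1)
    (T : ℕ) (hT : 0 < T)
    (x₁ : EuclideanSpace ℝ (Fin d)) (hgap : f lowbd < f x₁)
    (η : ℝ)
    (hηdef : η = Real.sqrt (2 * (f x₁ - f lowbd) / (αu ^ 2 * (∑ i, L i) * T)))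
    (x : ℕ → (Fin T → Fin T → S) → EuclideanSpace ℝ (Fin d))
    (g : Fin T → (Fin T → Fin T → S) → EuclideanSpace ℝ (Fin d))
    (v : ℕ → (Fin T → Fin T → S) → Fin d → ℝ)
    (r : Fin T → (Fin T → Fin T → S) → EuclideanSpace ℝ (Fin d))
    (hx0 : ∀ ω, x 0 ω = x₁)
    (hv0 : ∀ ω j, v 0 ω j = 0)
    (hg : ∀ (t : Fin T) ω,
      g t ω = (T : ℝ)⁻¹ • ∑ m : Fin T, gradient (fun z => ℓ z (ω t m)) (x t ω))
    (hvrec : ∀ (t : Fin T) ω (j : Fin d),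
      v ((t : ℕ) + 1) ω j = β₂ * v t ω j + (1 - β₂) * (g t ω j) ^ 2)
    (hr : ∀ (t : Fin T) ω (j : Fin d),
      r t ω j = g t ω j / Real.sqrt (v ((t : ℕ) + 1) ω j))
    (hrne : ∀ᵐ ω ∂(Measure.pi fun _ : Fin T => Measure.pi fun _ : Fin T => P),
      ∀ (t : Fin T) (i : Fin h), blockNorm blk i (r t ω) ≠ 0)
    (hupd : ∀ (t : Fin T) ω (j : Fin d),
      x ((t : ℕ) + 1) ω j
        = x t ω j - η * φ (blockNorm blk (blk j) (x t ω)) * r t ω j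
            / blockNorm blk (blk j) (r t ω)) :
    (T : ℝ)⁻¹ * ∑ t ∈ Finset.range T,
        ∫ ω, ‖gradient f (x t ω)‖ ^ 2
          ∂(Measure.pi fun _ : Fin T => Measure.pi fun _ : Fin T => P)
      ≤ Real.sqrt (G ^ 2 * d / (h * (1 - β₂))) * (αu / αl)
          * (Real.sqrt (2 * (f x₁ - f lowbd) * (∑ i, L i) / T)
              + (∑ j, σt j) / Real.sqrt T) := by
  classical
  have hTp : (0 : ℝ) < T := by positivity
  have hαlu : αl ≤ αu := (hφ 0 le_rfl).1.trans (hφ 0 le_rfl).2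
  have hαu : 0 < αu := hαl.trans_le hαlu
  have hβ : 0 < 1 - β₂ := by linarith
  set Λ := ∑ i, L i with hΛ
  have hh : 0 < h := by
    rcases Nat.eq_zero_or_pos h with rfl | h0
    · simp [hΛ] at hLpos
    · exact h0
  have hd : 0 < d := by
    rcases Nat.eq_zero_or_pos d with rfl | h0
    · exact absurd hgap (by rw [Subsingleton.elim lowbd x₁]; exact lt_irrefl _)
    · exact h0
  have hdh : 0 < d / h := Nat.div_pos (Nat.le_of_dvd hd hdvd) hh
  have hdR : (0 : ℝ) < d := by positivity
  have hhR : (0 : ℝ) < h := by positivity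
  have hL : ∀ i, 0 ≤ L i := by
    intro i
    obtain ⟨j, hj⟩ : (univ.filter (fun j => blk j = i)).Nonempty := by
      rw [← card_pos, hcard]; exact hdh
    obtain rfl : blk j = i := by simpa using hj
    have h1 := (blockNorm_nonneg _ _ _).trans (hsmoothf (EuclideanSpace.single j 1) 0 (blk j))
    have h2 : 0 < blockNorm blk (blk j) (EuclideanSpace.single j (1 : ℝ) - 0) :=
      lt_of_lt_of_le (by simp) (abs_le_blockNorm blk _ j)
    exact nonneg_of_mul_nonneg_left h1 h2
  set R := Real.sqrt (G ^ 2 * d / (h * (1 - β₂))) with hR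
  have hRpos : 0 < R := Real.sqrt_pos.2 (by positivity)
  have hηpos : 0 < η := by
    rw [hηdef]
    have : 0 < f x₁ - f lowbd := by linarith
    exact Real.sqrt_pos.2 (by positivity)
  have hgradc : ∀ y j, gradient f y j = ∫ s, gradient (fun z => ℓ z s) y j ∂P := by
    intro y j
    rw [hgrad y]
    exact ((EuclideanSpace.proj (𝕜 := ℝ) j).integral_comp_comm (hgradint y)).symm
  have hmeasc : ∀ y j, Measurable fun s => gradient (fun z => ℓ z s) y j := fun y j =>
    (EuclideanSpace.proj (𝕜 := ℝ) j).continuous.measurable.comp (hgradmeas y)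
  have hmemc : ∀ y j, MemLp (fun s => gradient (fun z => ℓ z s) y j) 2 P := fun y j =>
    MemLp.of_bound (hmeasc y j).aestronglyMeasurable G
      (Filter.Eventually.of_forall fun s => hGbd y s j)
  have hintc : ∀ y j, Integrable (fun s => gradient (fun z => ℓ z s) y j) P := fun y j =>
    (hmemc y j).integrable (by norm_num)
  have hgc : ∀ (t : Fin T) ω j,
      g t ω j = (T : ℝ)⁻¹ * ∑ m : Fin T, gradient (fun z => ℓ z (ω t m)) (x t ω) j := by
    intro t ω j
    rw [hg]; simp
  have hgG : ∀ (t : Fin T) ω j, |g t ω j| ≤ G := by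
    intro t ω j
    rw [hgc, abs_mul, abs_of_pos (inv_pos.2 hTp), inv_mul_le_iff₀ hTp]
    refine (abs_sum_le_sum_abs _ _).trans ((sum_le_sum fun m _ => hGbd _ _ _).trans ?_)
    simp
  have hv : ∀ n ≤ T, ∀ ω j, 0 ≤ v n ω j ∧ v n ω j ≤ G ^ 2 := by
    intro n
    induction n with
    | zero => intro _ ω j; rw [hv0]; exact ⟨le_rfl, by positivity⟩
    | succ n ih =>
      intro hn ω j
      have h1 := ih (by omega) ω j
      have h2 := hvrec ⟨n, by omega⟩ ω j
      have h3 := sq_le_sq' (abs_le.1 (hgG ⟨n, by omega⟩ ω j)).1 (abs_le.1 (hgG ⟨n, by omega⟩ ω j)).2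
      simp only at h2
      rw [h2]
      constructor
      · have := h1.1; positivity
      · nlinarith
  -- The iterates before step `n` use only the batches with index `< n`.
  have hdep : ∀ n ≤ T, ∀ ω ω', (∀ s : Fin T, (s : ℕ) < n → ω s = ω' s) →
      x n ω = x n ω' ∧ v n ω = v n ω' := by
    intro n
    induction n with
    | zero => intro _ ω ω' _; exact ⟨by rw [hx0, hx0], by ext j; rw [hv0, hv0]⟩
    | succ n ih =>
      intro hn ω ω' hω
      obtain ⟨hx, hv'⟩ := ih (by omega) ω ω' fun s hs => hω s (by omega)
      set t : Fin T := ⟨n, by omega⟩ with ht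
      have hxt : x t ω = x t ω' := hx
      have hgt : g t ω = g t ω' := by rw [hg, hg, hxt, hω t (by simp [ht])]
      have hvt : v ((t : ℕ) + 1) ω = v ((t : ℕ) + 1) ω' := by
        ext j
        rw [hvrec, hvrec, hgt]
        simp only [ht, hv']
      have hrt : r t ω = r t ω' := by
        ext j; rw [hr, hr, hgt, hvt]
      refine ⟨?_, hvt⟩
      ext j
      have h1 := hupd t ω j
      rw [hxt, hrt, ← hupd t ω' j] at h1
      exact h1
  -- `Nz` collects the stochastic error of a step: a centred linear part and the cost of wrong signs.
  set Nz : Fin T → (Fin T → Fin T → S) → ℝ := fun t ω =>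
    ∑ j, (φ (blockNorm blk (blk j) (x t ω)) * R⁻¹
        * (gradient f (x t ω) j * (gradient f (x t ω) j - g t ω j))
      + αu * |g t ω j - gradient f (x t ω) j|) with hNz
  -- One step of the method, along a fixed sample path.
  have hstep : ∀ (t : Fin T) ω, f (x ((t : ℕ) + 1) ω) ≤ f (x t ω)
      - η * (αl * R⁻¹ * ‖gradient f (x t ω)‖ ^ 2) + η * Nz t ω + η ^ 2 * αu ^ 2 * Λ / 2 := by
    intro t ω
    set a := gradient f (x t ω) with ha
    set p : Fin d → ℝ := fun j => φ (blockNorm blk (blk j) (x t ω)) with hp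
    have hpb : ∀ j, αl ≤ p j ∧ p j ≤ αu := fun j => hφ _ (blockNorm_nonneg _ _ _)
    set δ := x ((t : ℕ) + 1) ω - x t ω with hδ
    have hδj : ∀ j, δ j = -(η * p j * (r t ω j / blockNorm blk (blk j) (r t ω))) := by
      intro j
      have := hupd t ω j
      simp only [hδ, PiLp.sub_apply, this, hp]
      ring
    have hvt := hv ((t : ℕ) + 1) (by omega) ω
    have hrj : ∀ j, r t ω j ^ 2 ≤ (1 - β₂)⁻¹ := by
      intro j
      rw [hr, div_pow, Real.sq_sqrt (hvt j).1]
      rcases (hvt j).1.eq_or_lt with h0 | h0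
      · rw [← h0, div_zero]; positivity
      · rw [div_le_iff₀ h0, inv_mul_eq_div, le_div_iff₀ hβ, hvrec]
        have := mul_nonneg hβ₂0.le (hv t t.2.le ω j).1
        linarith
    have hrn : ∀ i, blockNorm blk i (r t ω) ≤ Real.sqrt (d / h * (1 - β₂)⁻¹) := by
      intro i
      apply Real.sqrt_le_sqrt
      refine (sum_le_sum fun j _ => hrj j).trans ?_
      rw [sum_const, hcard, nsmul_eq_mul, Nat.cast_div hdvd (by positivity)]
    -- The normalised direction is a multiple of `g` with factor at least `R⁻¹`;
    -- where `g` vanishes the direction is `0` and any factor works.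
    have hq : ∀ j, ∃ c, R⁻¹ ≤ c ∧
        r t ω j / blockNorm blk (blk j) (r t ω) = c * g t ω j := by
      intro j
      by_cases hg0 : g t ω j = 0
      · exact ⟨R⁻¹, le_rfl, by rw [hr, hg0]; simp⟩
      · have hvpos : 0 < v ((t : ℕ) + 1) ω j := by
          rw [hvrec]
          have := mul_nonneg hβ₂0.le (hv t t.2.le ω j).1
          have : 0 < (1 - β₂) * g t ω j ^ 2 := by positivity
          linarith
        have hsv : 0 < Real.sqrt (v ((t : ℕ) + 1) ω j) := Real.sqrt_pos.2 hvpos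
        have hsG : Real.sqrt (v ((t : ℕ) + 1) ω j) ≤ G := by
          rw [Real.sqrt_le_left hG.le]; exact (hvt j).2
        have hrpos : 0 < blockNorm blk (blk j) (r t ω) := by
          refine lt_of_lt_of_le ?_ (abs_le_blockNorm blk _ j)
          rw [hr]; exact abs_pos.2 (div_ne_zero hg0 hsv.ne')
        refine ⟨(Real.sqrt (v ((t : ℕ) + 1) ω j) * blockNorm blk (blk j) (r t ω))⁻¹, ?_, ?_⟩
        · refine inv_anti₀ (by positivity) ?_
          calc _ ≤ G * Real.sqrt (d / h * (1 - β₂)⁻¹) := by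
                gcongr; exact hrn _
            _ = R := by
                rw [hR, ← Real.sqrt_sq hG.le, ← Real.sqrt_mul (by positivity), Real.sqrt_sq hG.le]
                congr 1; field_simp
        · rw [hr]; field_simp
    have hq1 : ∀ j, |r t ω j / blockNorm blk (blk j) (r t ω)| ≤ 1 := by
      intro j
      rw [abs_div, abs_of_nonneg (blockNorm_nonneg _ _ _)]
      exact div_le_one_of_le₀ (abs_le_blockNorm _ _ _) (blockNorm_nonneg _ _ _)
    have hlin : ∑ j, a j * δ j ≤ η * (-(αl * R⁻¹ * ‖a‖ ^ 2) + Nz t ω) := by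
      rw [EuclideanSpace.real_norm_sq_eq, hNz, mul_sum, ← sum_neg_distrib, ← sum_add_distrib, mul_sum]
      refine sum_le_sum fun j _ => ?_
      obtain ⟨c, hc, hcq⟩ := hq j
      have h1 := coord_step (p j) (a j) (g t ω j) c R⁻¹ αu (hαl.le.trans (hpb j).1) (hpb j).2
        (by positivity) hc (by rw [← hcq]; exact hq1 j)
      have h2 : αl * R⁻¹ * a j ^ 2 ≤ p j * R⁻¹ * a j ^ 2 := by
        gcongr; exact (hpb j).1
      have h3 : a j * δ j = η * -(p j * a j * (c * g t ω j)) := by rw [hδj, hcq]; ring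
      rw [h3]
      refine mul_le_mul_of_nonneg_left ?_ hηpos.le
      simp only [← ha]
      change _ ≤ -(αl * R⁻¹ * a j ^ 2) + (p j * R⁻¹ * (a j * (a j - g t ω j))
        + αu * |g t ω j - a j|)
      linarith
    have hδn : ∀ i, blockNorm blk i δ ^ 2 ≤ η ^ 2 * αu ^ 2 := by
      intro i
      set B := blockNorm blk i (r t ω) with hB
      have hB2 : B ^ 2 = ∑ j ∈ univ.filter (fun j => blk j = i), r t ω j ^ 2 :=
        Real.sq_sqrt (sum_nonneg fun _ _ => sq_nonneg _)
      rw [blockNorm, Real.sq_sqrt (sum_nonneg fun _ _ => sq_nonneg _)]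
      calc _ ≤ ∑ j ∈ univ.filter (fun j => blk j = i), η ^ 2 * αu ^ 2 * (r t ω j ^ 2 / B ^ 2) := by
            refine sum_le_sum fun j hj => ?_
            obtain rfl : blk j = i := by simpa using hj
            rw [hδj, neg_sq, mul_pow, mul_pow, div_pow]
            have := (hpb j).2
            have := hαl.le.trans (hpb j).1
            gcongr
        _ = η ^ 2 * αu ^ 2 * (B ^ 2 / B ^ 2) := by rw [← mul_sum, ← sum_div, hB2]
        _ ≤ _ := mul_le_of_le_one_right (by positivity) (div_self_le_one _)
    have hquad : ∑ i, L i * blockNorm blk i δ ^ 2 ≤ η ^ 2 * αu ^ 2 * Λ := by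
      rw [hΛ, mul_sum]
      refine sum_le_sum fun i _ => ?_
      rw [mul_comm]
      exact mul_le_mul_of_nonneg_right (hδn i) (hL i)
    have hds := descent blk f hfdiff L hsmoothf (x t ω) δ
    rw [hδ, add_sub_cancel, ← hδ] at hds
    linarith
  -- Telescoping the one-step bounds.
  have htel : ∀ ω, ∀ n ≤ T, f (x n ω) ≤ f x₁
      + ∑ t ∈ univ.filter (fun t : Fin T => (t : ℕ) < n),
        (- η * (αl * R⁻¹ * ‖gradient f (x t ω)‖ ^ 2) + η * Nz t ω + η ^ 2 * αu ^ 2 * Λ / 2) := by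
    intro ω n
    induction n with
    | zero => intro _; simp [hx0]
    | succ n ih =>
      intro hn
      have h1 := ih (by omega)
      have h2 := hstep ⟨n, by omega⟩ ω
      have h3 : univ.filter (fun t : Fin T => (t : ℕ) < n + 1)
          = insert ⟨n, by omega⟩ (univ.filter (fun t : Fin T => (t : ℕ) < n)) := by
        ext t; simp [Fin.ext_iff]; omega
      rw [h3, sum_insert (by simp)]
      simp only at h2 ⊢
      linarith
  have hpath : ∀ ω, ∑ t : Fin T, ‖gradient f (x t ω)‖ ^ 2
      ≤ R / αl * ((f x₁ - f lowbd) / η + T * η * αu ^ 2 * Λ / 2)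
        + ∑ t, R / αl * Nz t ω := by
    intro ω
    have h1 := (hlow _).trans (htel ω T le_rfl)
    simp only [Fin.is_lt, filter_true, sum_add_distrib, ← mul_sum, sum_const, card_univ,
      Fintype.card_fin, nsmul_eq_mul] at h1
    rw [← mul_sum]
    set X := ∑ t : Fin T, ‖gradient f (x t ω)‖ ^ 2
    set Y := ∑ t, Nz t ω
    have h2 : η * (αl * R⁻¹) * X ≤ η * (αl * R⁻¹) * (R / αl *
        ((f x₁ - f lowbd) / η + T * η * αu ^ 2 * Λ / 2) + R / αl * Y) := by
      have : η * (αl * R⁻¹) * (R / αl *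
        ((f x₁ - f lowbd) / η + T * η * αu ^ 2 * Λ / 2) + R / αl * Y)
        = (f x₁ - f lowbd) + T * (η ^ 2 * αu ^ 2 * Λ / 2) + η * Y := by
        field_simp
      rw [this]
      linarith
    exact le_of_mul_le_mul_left h2 (by positivity)
  have hxup : ∀ (t : Fin T) ω y, x t (Function.update ω t y) = x t ω := by
    intro t ω y
    refine (hdep t t.2.le _ _ fun s hs => ?_).1
    rw [Function.update_of_ne]
    rintro rfl; exact lt_irrefl _ hs
  have hgup : ∀ (t : Fin T) ω y j, g t (Function.update ω t y) j
      = (T : ℝ)⁻¹ * ∑ m : Fin T, gradient (fun z => ℓ z (y m)) (x t ω) j := by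
    intro t ω y j
    rw [hgc, hxup, Function.update_self]
  set Q : Measure (Fin T → S) := Measure.pi fun _ : Fin T => P with hQ
  have hint1 : ∀ (t : Fin T) ω j, Integrable (fun y => g t (Function.update ω t y) j) Q := by
    intro t ω j
    simp only [hgup]
    exact (integrable_finsetSum _ fun m _ => batch_integrable P T _ (hintc _ j) m).const_mul _
  have hmean : ∀ (t : Fin T) ω j,
      ∫ y, g t (Function.update ω t y) j ∂Q = gradient f (x t ω) j := by
    intro t ω j
    simp only [hgup]
    rw [hgradc]
    exact batch_mean P T hT _ (hintc _ j)
  have hdev : ∀ (t : Fin T) ω j,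
      ∫ y, |g t (Function.update ω t y) j - gradient f (x t ω) j| ∂Q ≤ σt j / Real.sqrt T := by
    intro t ω j
    have hva := hvar (x t ω) j
    simp only [hgup]
    rw [hgradc] at hva ⊢
    exact batch_abs_dev P T hT _ (hmemc _ j) _ (hσt j) hva
  have hI1 : ∀ (t : Fin T) ω j, Integrable (fun y => φ (blockNorm blk (blk j) (x t ω)) * R⁻¹
        * (gradient f (x t ω) j * (gradient f (x t ω) j - g t (Function.update ω t y) j))) Q :=
    fun t ω j => (((integrable_const _).sub (hint1 t ω j)).const_mul _).const_mul _
  have hI2 : ∀ (t : Fin T) ω j, Integrable (fun y => αu *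
      |g t (Function.update ω t y) j - gradient f (x t ω) j|) Q :=
    fun t ω j => ((hint1 t ω j).sub (integrable_const _)).abs.const_mul _
  have hNint : ∀ (t : Fin T) ω, Integrable (fun y => Nz t (Function.update ω t y)) Q := by
    intro t ω
    simp only [hNz, hxup]
    exact integrable_finsetSum _ fun j _ => (hI1 t ω j).add (hI2 t ω j)
  have hNle : ∀ (t : Fin T) ω, ∫ y, Nz t (Function.update ω t y) ∂Q
      ≤ αu * ((∑ j, σt j) / Real.sqrt T) := by
    intro t ω
    simp only [hNz, hxup]
    rw [integral_finsetSum _ fun j _ => by exact (hI1 t ω j).add (hI2 t ω j), sum_div, mul_sum]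
    refine sum_le_sum fun j _ => ?_
    rw [integral_add (hI1 t ω j) (hI2 t ω j), integral_const_mul, integral_const_mul,
      integral_const_mul, integral_sub (integrable_const _) (hint1 t ω j), hmean]
    simp only [integral_const, probReal_univ, one_smul, sub_self, mul_zero, zero_add]
    exact mul_le_mul_of_nonneg_left (hdev t ω j) hαu.le
  have hNdep : ∀ (t : Fin T) ω ω', (∀ s ≤ t, ω s = ω' s) → Nz t ω = Nz t ω' := by
    intro t ω ω' hω
    have h1 : x t ω = x t ω' := (hdep t t.2.le ω ω' fun s hs => hω s (Fin.le_def.2 hs.le)).1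
    have h2 : g t ω = g t ω' := by rw [hg, hg, h1, hω t le_rfl]
    simp only [hNz, h1, h2]
  -- Without measurability of `φ` some summands may fail to be integrable; these have integral `0`.
  set W : Measure (Fin T → Fin T → S) := Measure.pi fun _ : Fin T => Q with hW
  set I := univ.filter (fun t : Fin T =>
    Integrable (fun ω => ‖gradient f (x t ω)‖ ^ 2) W) with hIdef
  have hsum : ∑ t ∈ range T, ∫ ω, ‖gradient f (x t ω)‖ ^ 2 ∂W
      = ∫ ω, ∑ t ∈ I, ‖gradient f (x t ω)‖ ^ 2 ∂W := by
    rw [integral_finsetSum _ fun t ht => (mem_filter.1 ht).2,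
      ← Fin.sum_univ_eq_sum_range (fun t => ∫ ω, ‖gradient f (x t ω)‖ ^ 2 ∂W), sum_filter]
    refine sum_congr rfl fun t _ => ?_
    split_ifs with ht
    · rfl
    · exact integral_undef ht
  have hmain := integral_le_of_adapted Q (R / αl * (αu * ((∑ j, σt j) / Real.sqrt T))) T
    (R / αl * ((f x₁ - f lowbd) / η + T * η * αu ^ 2 * Λ / 2))
    (fun ω => ∑ t ∈ I, ‖gradient f (x t ω)‖ ^ 2) (fun t ω => R / αl * Nz t ω)
    (integrable_finsetSum _ fun t ht => (mem_filter.1 ht).2)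
    (fun t ω ω' hω => by simp only [hNdep t ω ω' hω])
    (fun t ω => (hNint t ω).const_mul _)
    (fun t ω => by
      rw [integral_const_mul]
      exact mul_le_mul_of_nonneg_left (hNle t ω) (by positivity))
    (fun ω => (sum_le_sum_of_subset_of_nonneg (filter_subset _ _)
      fun _ _ _ => by positivity).trans (hpath ω))
  rw [hsum, inv_mul_le_iff₀ hTp]
  refine hmain.trans (le_of_eq ?_)
  -- With `s = √(2Δ‖L‖₁/T)` the stepsize is `η = s / (αu ‖L‖₁)`, which balances the two terms.
  set Δ := f x₁ - f lowbd with hΔ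
  have hΔpos : 0 < Δ := by linarith
  set s := Real.sqrt (2 * Δ * Λ / T) with hs
  have hspos : 0 < s := Real.sqrt_pos.2 (by positivity)
  have hs2 : s ^ 2 = 2 * Δ * Λ / T := Real.sq_sqrt (by positivity)
  have hηs : η = s / (αu * Λ) := by
    rw [hηdef, Real.sqrt_eq_iff_mul_self_eq_of_pos (by positivity)]
    rw [div_mul_div_comm, ← sq, hs2]
    field_simp
  have hbal : Δ / η + T * η * αu ^ 2 * Λ / 2 = T * αu * s := by
    have : Δ = s ^ 2 * T / (2 * Λ) := by rw [hs2]; field_simp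
    rw [hηs, this]
    field_simp
    ring
  rw [hbal]
  ring
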